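/- Let s ≥ p ≥ 2 be reals and let u, v, w ∈ ℝ^n. Then s(s−1) Σ_i |u_i|^{s−2} w_i² ≤ e · s(s−1) Σ_i |v_i|^{s−2} w_i² + s^s ‖u − v‖_p^{s−2} ‖w‖_2², where e is Euler's number. -/

import Mathlib

/-!
With `r = s - 2`, `a = |v i|` and `b` the `ℓ_p` norm of `u - v`, which bounds every coordinate of
`u - v` (`abs_le_lpNorm`), one has `|u i| ≤ a + b` and
`(a + b) ^ r ≤ e * a ^ r + (1 + r) ^ r * b ^ r` (`add_rpow_le_exp`). For `r = 0` this is `1 ≤ e + 1`;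
for `r > 0`, if `r * b ≤ a`, then
`a + b ≤ (1 + 1 / r) * a` and `(1 + 1 / r) ^ r ≤ e`; otherwise `a + b ≤ (1 + r) * b`.
Multiplying by `s * (s - 1) * (w i) ^ 2` and summing over `i` gives the claim, because
`s * (s - 1) * (s - 1) ^ (s - 2) = s * (s - 1) ^ (s - 1) ≤ s ^ s` (`const_le_rpow_self`).
-/

open Finset

/-- The ℓ_q "norm" for real exponent q: ‖x‖_q = (Σ_i |x_i|^q)^(1/q). -/
noncomputable def lpNorm {n : ℕ} (q : ℝ) (x : Fin n → ℝ) : ℝ :=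
  (∑ i, |x i| ^ q) ^ (1 / q)

theorem add_rpow_le_exp {a b r : ℝ} (ha : 0 ≤ a) (hb : 0 ≤ b) (hr : 0 ≤ r) :
    (a + b) ^ r ≤ Real.exp 1 * a ^ r + (1 + r) ^ r * b ^ r := by
  rcases hr.eq_or_lt with rfl | hr
  · simp only [Real.rpow_zero]
    linarith [Real.exp_pos 1]
  rcases le_total (r * b) a with h | h
  · have h1 : a + b ≤ a * Real.exp (1 / r) := by
      have hb' : b ≤ a * (1 / r) := by
        rw [mul_one_div, le_div_iff₀ hr]
        linarith
      have := mul_le_mul_of_nonneg_left (Real.add_one_le_exp (1 / r)) ha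
      linarith
    have h2 : (a + b) ^ r ≤ Real.exp 1 * a ^ r := by
      calc (a + b) ^ r ≤ (a * Real.exp (1 / r)) ^ r :=
            Real.rpow_le_rpow (by positivity) h1 hr.le
        _ = Real.exp 1 * a ^ r := by
            rw [Real.mul_rpow ha (Real.exp_pos _).le, ← Real.exp_mul,
              one_div_mul_cancel hr.ne', mul_comm]
    have : 0 ≤ (1 + r) ^ r * b ^ r := by positivity
    linarith
  · have h2 : (a + b) ^ r ≤ (1 + r) ^ r * b ^ r := by
      rw [← Real.mul_rpow (by positivity) hb]
      exact Real.rpow_le_rpow (by positivity) (by linarith) hr.le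
    have : 0 ≤ Real.exp 1 * a ^ r := by positivity
    linarith

theorem abs_le_lpNorm {n : ℕ} {p : ℝ} (hp : 0 < p) (x : Fin n → ℝ) (i : Fin n) :
    |x i| ≤ lpNorm p x := by
  have h : |x i| ^ p ≤ ∑ j, |x j| ^ p :=
    Finset.single_le_sum (f := fun j => |x j| ^ p) (fun j _ => by positivity) (Finset.mem_univ i)
  calc |x i| = (|x i| ^ p) ^ (1 / p) := by
        rw [one_div, Real.rpow_rpow_inv (abs_nonneg _) hp.ne']
    _ ≤ lpNorm p x := Real.rpow_le_rpow (by positivity) h (by positivity)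

theorem lpNorm_two_sq {n : ℕ} (w : Fin n → ℝ) : (lpNorm 2 w) ^ 2 = ∑ i, (w i) ^ 2 := by
  have h : ∑ i, |w i| ^ (2 : ℝ) = ∑ i, (w i) ^ 2 :=
    Finset.sum_congr rfl fun i _ => by rw [Real.rpow_two, sq_abs]
  rw [lpNorm, h, ← Real.sqrt_eq_rpow, Real.sq_sqrt (Finset.sum_nonneg fun i _ => sq_nonneg _)]

/-- The factor `1 + (s - 2)` is kept in the form in which `add_rpow_le_exp` produces it. -/
theorem const_le_rpow_self {s : ℝ} (hs : 2 ≤ s) :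
    s * (s - 1) * (1 + (s - 2)) ^ (s - 2) ≤ s ^ s := by
  have h1 : (s - 1) * (1 + (s - 2)) ^ (s - 2) = (s - 1) ^ (s - 1) := by
    rw [show 1 + (s - 2) = s - 1 by ring, ← Real.rpow_one_add' (by linarith) (by linarith)]
    congr 1
    ring
  have h2 : s * s ^ (s - 1) = s ^ s := by
    rw [← Real.rpow_one_add' (by linarith) (by linarith)]
    congr 1
    ring
  rw [mul_assoc, h1, ← h2]
  exact mul_le_mul_of_nonneg_left
    (Real.rpow_le_rpow (by linarith) (by linarith) (by linarith)) (by linarith)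

theorem stmt13 {n : ℕ} (p s : ℝ) (hp : 2 ≤ p) (hps : p ≤ s)
    (u v w : Fin n → ℝ) :
    s * (s - 1) * ∑ i, |u i| ^ (s - 2) * (w i) ^ 2
      ≤ Real.exp 1 * (s * (s - 1) * ∑ i, |v i| ^ (s - 2) * (w i) ^ 2)
        + s ^ s * (lpNorm p (u - v)) ^ (s - 2) * (lpNorm 2 w) ^ 2 := by
  have hs : 2 ≤ s := hp.trans hps
  have hc : 0 ≤ s * (s - 1) := mul_nonneg (by linarith) (by linarith)
  rw [lpNorm_two_sq]
  simp only [Finset.mul_sum]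
  rw [← Finset.sum_add_distrib]
  refine Finset.sum_le_sum fun i _ => ?_
  have hd : |(u - v) i| ≤ lpNorm p (u - v) := abs_le_lpNorm (by linarith) _ i
  have hN : 0 ≤ lpNorm p (u - v) := (abs_nonneg _).trans hd
  have hu : |u i| ≤ |v i| + lpNorm p (u - v) := by
    have h := abs_add_le (v i) ((u - v) i)
    rw [Pi.sub_apply, add_sub_cancel] at h
    rw [Pi.sub_apply] at hd
    linarith
  have h1 : |u i| ^ (s - 2) ≤ Real.exp 1 * |v i| ^ (s - 2)
      + (1 + (s - 2)) ^ (s - 2) * lpNorm p (u - v) ^ (s - 2) :=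
    (Real.rpow_le_rpow (abs_nonneg _) hu (by linarith)).trans
      (add_rpow_le_exp (abs_nonneg _) hN (by linarith))
  have h2 := mul_le_mul_of_nonneg_left h1 hc
  have h3 := mul_le_mul_of_nonneg_right (const_le_rpow_self hs)
    (Real.rpow_nonneg hN (s - 2))
  have h4 : s * (s - 1) * |u i| ^ (s - 2) ≤ Real.exp 1 * (s * (s - 1) * |v i| ^ (s - 2))
      + s ^ s * lpNorm p (u - v) ^ (s - 2) := by linarith
  have h5 := mul_le_mul_of_nonneg_right h4 (sq_nonneg (w i))
  linarith
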